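/- Let s ∈ (0, 1/2], ε₁ > 0, T > 0 and K > 0, and let θ be a classical solution of the regularized fractional Burgers equation with viscosity ε₁ on ℝ × (0,T] such that: ‖θ(·,t)‖_{L²(ℝ)} ≤ K for all t ∈ (0,T]; for each t ∈ (0,T], θ(x,t) → 0 as x → ±∞ uniformly for t in compact subsets of (0,T]; and t^{1/(4s)} θ(x,t) → 0 as t → 0⁺ uniformly in x. Then there exists a constant C(s) > 0 depending only on s such that sup_{x ∈ ℝ} |θ(x,t)| ≤ C(s) t^{−1/(4s)} K for every t ∈ (0,T]. -/

import Mathlib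

open MeasureTheory Real Set Filter

/-- The normalizing constant of the 1-D fractional Laplacian. -/
noncomputable def fracC (s : ℝ) : ℝ :=
  (4 : ℝ) ^ s * Real.Gamma (1 / 2 + s) / (Real.sqrt Real.pi * |Real.Gamma (-s)|)

/-- The fractional Laplacian `(-Δ)^s u (x)`. -/
noncomputable def fracLap (s : ℝ) (u : ℝ → ℝ) (x : ℝ) : ℝ :=
  fracC s * ∫ y : ℝ, (u x - u y) / |x - y| ^ (1 + 2 * s)

/-- A classical solution of the regularized fractional Burgers equation
`θ_t + θ θ_x + (-Δ)^s θ - ε₁ θ_xx = 0` on a set `D ⊆ ℝ × ℝ` (points written `(x, t)`):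
a bounded continuous function, continuously differentiable in `t` and twice continuously
differentiable in `x`, satisfying the equation at every point of `D`, where the fractional
Laplacian (acting in `x`) is given by an absolutely convergent integral. -/
structure IsClassicalSolution (s ε₁ : ℝ) (θ : ℝ → ℝ → ℝ) (D : Set (ℝ × ℝ)) : Prop where
  bounded : ∃ B : ℝ, ∀ p ∈ D, |θ p.1 p.2| ≤ B
  cont : ContinuousOn (fun p : ℝ × ℝ => θ p.1 p.2) D
  diff_t : ∀ p ∈ D, DifferentiableAt ℝ (fun t => θ p.1 t) p.2
  cont_dt : ContinuousOn (fun p : ℝ × ℝ => deriv (fun t => θ p.1 t) p.2) D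
  diff_x : ∀ p ∈ D, DifferentiableAt ℝ (fun x => θ x p.2) p.1
  diff_xx : ∀ p ∈ D, DifferentiableAt ℝ (deriv fun x => θ x p.2) p.1
  cont_dx : ContinuousOn (fun p : ℝ × ℝ => deriv (fun x => θ x p.2) p.1) D
  cont_dxx : ContinuousOn (fun p : ℝ × ℝ => deriv (deriv fun x => θ x p.2) p.1) D
  integrable : ∀ p ∈ D,
    Integrable fun y : ℝ => (θ p.1 p.2 - θ y p.2) / |p.1 - y| ^ (1 + 2 * s)
  eqn : ∀ p ∈ D,
    deriv (fun t => θ p.1 t) p.2 + θ p.1 p.2 * deriv (fun x => θ x p.2) p.1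
      + fracLap s (fun x => θ x p.2) p.1
      - ε₁ * deriv (deriv fun x => θ x p.2) p.1 = 0

/-!
At a space-time maximum `(x₀, t₀)` of `t ^ α * |θ x t|` the transport term vanishes and the viscous
term has a favourable sign, so the equation gives `(-Δ)^s |θ| ≤ -∂ₜ|θ| ≤ (α / t₀) |θ|` there. A
function with maximum `M` and `L^p` norm at most `K` averages well below `M` over an interval
of length comparable to `(K / M) ^ p`, hence `(-Δ)^s |θ| ≥ c M (M / K) ^ (2 p s)`.
For `α = 1 / (2 p s)` the two bounds combine to `t₀ ^ α * M ≤ C K`. The maximum is attained because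
the weighted function vanishes as `t → 0⁺` and at spatial infinity.
-/

section MaximumPrinciple

theorem deriv_deriv_nonpos_of_isLocalMax {f : ℝ → ℝ} {x : ℝ} (hf : ContinuousAt f x)
    (h : IsLocalMax f x) : deriv (deriv f) x ≤ 0 := by
  by_contra! hpos
  have hmin := isLocalMin_of_deriv_deriv_pos hpos h.deriv_eq_zero hf
  have hconst : f =ᶠ[nhds x] fun _ => f x := by
    filter_upwards [h, hmin] with y hle hge using le_antisymm hle hge
  have hzero : deriv (deriv f) x = 0 := by simpa using hconst.deriv.deriv_eq
  exact hpos.ne' hzero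

theorem hasDerivWithinAt_nonneg_of_isLocalMaxOn_Iic {f : ℝ → ℝ} {f' a : ℝ}
    (hf : HasDerivWithinAt f f' (Iic a) a) (h : IsLocalMaxOn f (Iic a) a) : 0 ≤ f' := by
  have hcone : (-1 : ℝ) ∈ posTangentConeAt (Iic a) a :=
    mem_posTangentConeAt_of_segment_subset <|
      (convex_Iic a).segment_subset self_mem_Iic (by simp)
  simpa using h.hasFDerivWithinAt_nonpos hf.hasFDerivWithinAt hcone

theorem neg_deriv_le_of_isLocalMaxOn_rpow_mul {f : ℝ → ℝ} {f' α a : ℝ} (ha : 0 < a)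
    (hf : HasDerivAt f f' a) (h : IsLocalMaxOn (fun t => t ^ α * f t) (Iic a) a) :
    -f' ≤ α / a * f a := by
  have hderiv := ((hasDerivAt_rpow_const (p := α) (Or.inl ha.ne')).mul hf).hasDerivWithinAt
    (s := Iic a)
  have hnonneg := hasDerivWithinAt_nonneg_of_isLocalMaxOn_Iic hderiv h
  have hfactor : α * a ^ (α - 1) * f a + a ^ α * f' = a ^ α * (α / a * f a + f') := by
    rw [rpow_sub_one ha.ne']
    ring
  have := nonneg_of_mul_nonneg_right (hfactor ▸ hnonneg) (rpow_pos_of_pos ha α)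
  linarith

theorem exists_isMaxOn_of_lt_off_isCompact {X : Type*} [TopologicalSpace X] {f : X → ℝ}
    {s k : Set X} {x₁ : X} (hk : IsCompact k) (hks : k ⊆ s) (hf : ContinuousOn f k)
    (hx₁ : x₁ ∈ s) (hoff : ∀ x ∈ s \ k, f x < f x₁) : ∃ x ∈ s, IsMaxOn f s x := by
  have hx₁k : x₁ ∈ k := by_contra fun h => lt_irrefl _ (hoff x₁ ⟨hx₁, h⟩)
  obtain ⟨x₀, hx₀, hmax⟩ := hk.exists_isMaxOn ⟨x₁, hx₁k⟩ hf
  refine ⟨x₀, hks hx₀, fun x hx => ?_⟩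
  by_cases hxk : x ∈ k
  · exact hmax hxk
  · exact (hoff x ⟨hx, hxk⟩).le.trans (hmax hx₁k)

theorem exists_isMaxOn_strip {E : Type*} [SeminormedAddCommGroup E] [ProperSpace E] {T : ℝ}
    {F : E × ℝ → ℝ} {p₁ : E × ℝ} (hF : ContinuousOn F {p | 0 < p.2 ∧ p.2 ≤ T})
    (hinf : ∀ a : ℝ, 0 < a → a ≤ T → ∀ ε : ℝ, 0 < ε →
      ∃ R : ℝ, ∀ x : E, R < ‖x‖ → ∀ t ∈ Icc a T, F (x, t) < ε)
    (hzero : ∀ ε : ℝ, 0 < ε → ∃ δ : ℝ, 0 < δ ∧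
      ∀ t : ℝ, 0 < t → t < δ → t ≤ T → ∀ x : E, F (x, t) < ε)
    (hp₁ : 0 < p₁.2 ∧ p₁.2 ≤ T) (hpos : 0 < F p₁) :
    ∃ p ∈ {p : E × ℝ | 0 < p.2 ∧ p.2 ≤ T}, IsMaxOn F {p | 0 < p.2 ∧ p.2 ≤ T} p := by
  obtain ⟨δ, hδ, hearly⟩ := hzero (F p₁) hpos
  have hδp₁ : δ ≤ p₁.2 := by
    by_contra! hlt
    exact lt_irrefl _ (hearly p₁.2 hp₁.1 hlt hp₁.2 p₁.1)
  obtain ⟨R, hfar⟩ := hinf δ hδ (hδp₁.trans hp₁.2) (F p₁) hpos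
  have hsub : Metric.closedBall (0 : E) R ×ˢ Icc δ T ⊆ {p | 0 < p.2 ∧ p.2 ≤ T} :=
    fun p hp => ⟨hδ.trans_le hp.2.1, hp.2.2⟩
  refine exists_isMaxOn_of_lt_off_isCompact ((isCompact_closedBall 0 R).prod isCompact_Icc) hsub
    (hF.mono hsub) hp₁ fun ⟨x, t⟩ ⟨⟨ht, htT⟩, hout⟩ => ?_
  rcases lt_or_ge t δ with hlt | hge
  · exact hearly t ht hlt htT x
  · refine hfar x ?_ t ⟨hge, htT⟩
    by_contra! hxR
    exact hout ⟨mem_closedBall_zero_iff.2 hxR, hge, htT⟩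

end MaximumPrinciple

section LowerBound

theorem div_mul_one_sub_rpow_le_sub {p M v : ℝ} (hp : 1 ≤ p) (hM : 0 < M) :
    M / p * (1 - |v| ^ p / M ^ p) ≤ M - v := by
  have hv : 0 ≤ |v| / M := by positivity
  have bernoulli := one_add_mul_self_le_rpow_one_add (s := |v| / M - 1) (by linarith) hp
  rw [add_sub_cancel, div_rpow (abs_nonneg v) hM.le] at bernoulli
  calc M / p * (1 - |v| ^ p / M ^ p) ≤ M / p * (p * (1 - |v| / M)) := by
        gcongr
        linarith
    _ = M - |v| := by field_simp
    _ ≤ M - v := by linarith [le_abs_self v]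

theorem integral_norm_rpow_le_of_eLpNorm_le {α E : Type*} [MeasurableSpace α]
    [NormedAddCommGroup E] {μ : Measure α} {f : α → E} {p K : ℝ} (hp : 0 < p) (hK : 0 ≤ K)
    (hf : AEStronglyMeasurable f μ) (h : eLpNorm f (ENNReal.ofReal p) μ ≤ ENNReal.ofReal K) :
    ∫ y, ‖f y‖ ^ p ∂μ ≤ K ^ p := by
  have hnorm : lpNorm f (ENNReal.ofReal p) μ ≤ K :=
    toReal_eLpNorm hf ▸ ENNReal.toReal_le_of_le_ofReal hK h
  rwa [lpNorm_eq_integral_norm_rpow_toReal (by simpa using hp) ENNReal.ofReal_ne_top hf,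
    ENNReal.toReal_ofReal hp.le, rpow_inv_le_iff_of_pos (by positivity) hK hp] at hnorm

theorem le_integral_sub_of_memLp {α : Type*} [MeasurableSpace α] {μ : Measure α}
    [IsFiniteMeasure μ] {u : α → ℝ} {p M : ℝ} (hp : 1 ≤ p) (hM : 0 < M)
    (hu : MemLp u (ENNReal.ofReal p) μ) :
    M / p * (μ.real univ - (∫ y, ‖u y‖ ^ p ∂μ) / M ^ p) ≤ ∫ y, (M - u y) ∂μ := by
  have hp0 : 0 < p := by linarith
  have hpow : Integrable (fun y => ‖u y‖ ^ p) μ := by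
    simpa only [ENNReal.toReal_ofReal hp0.le] using hu.integrable_norm_rpow'
  have hu1 : Integrable u μ := hu.integrable (by simpa using hp)
  calc M / p * (μ.real univ - (∫ y, ‖u y‖ ^ p ∂μ) / M ^ p)
      = ∫ y, M / p * (1 - ‖u y‖ ^ p / M ^ p) ∂μ := by
        rw [integral_const_mul, integral_sub (integrable_const 1) (hpow.div_const _),
          integral_div, integral_const, smul_eq_mul, mul_one]
    _ ≤ ∫ y, (M - u y) ∂μ :=
        integral_mono (((integrable_const 1).sub (hpow.div_const _)).const_mul _)
          ((integrable_const M).sub hu1) fun y => div_mul_one_sub_rpow_le_sub hp hM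

theorem setIntegral_closedBall_sub_div_rpow_le {X : Type*} [MetricSpace X] [MeasurableSpace X]
    [OpensMeasurableSpace X] {μ : Measure X} {u : X → ℝ} {x : X} {a r : ℝ} (ha : 0 ≤ a)
    (hint : Integrable (fun y => (u x - u y) / dist x y ^ a) μ) (hmax : ∀ y, u y ≤ u x) :
    (∫ y in Metric.closedBall x r, (u x - u y) ∂μ) / r ^ a ≤
      ∫ y, (u x - u y) / dist x y ^ a ∂μ := by
  have hsub : ∀ y, 0 ≤ u x - u y := fun y => sub_nonneg.2 (hmax y)
  have hball : ∀ᵐ y ∂μ.restrict (Metric.closedBall x r), dist x y ≤ r := by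
    filter_upwards [ae_restrict_mem Metric.isClosed_closedBall.measurableSet] with y hy
    rwa [dist_comm]
  calc (∫ y in Metric.closedBall x r, (u x - u y) ∂μ) / r ^ a
      = ∫ y in Metric.closedBall x r, (u x - u y) / r ^ a ∂μ := (integral_div _ _).symm
    _ ≤ ∫ y in Metric.closedBall x r, (u x - u y) / dist x y ^ a ∂μ := by
        refine integral_mono_of_nonneg ?_ hint.integrableOn ?_
        · filter_upwards [hball] with y hy
          exact div_nonneg (hsub y) (rpow_nonneg (dist_nonneg.trans hy) a)
        · filter_upwards [hball] with y hy
          rcases eq_or_ne x y with rfl | hne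
          · simp
          · have := rpow_pos_of_pos (dist_pos.2 hne) a
            have := hsub y
            gcongr
    _ ≤ ∫ y, (u x - u y) / dist x y ^ a ∂μ :=
        setIntegral_le_integral hint (Eventually.of_forall fun y =>
          div_nonneg (hsub y) (rpow_nonneg dist_nonneg a))

theorem le_integral_sub_div_rpow_of_isMax {u : ℝ → ℝ} {x a p K : ℝ} (ha : 0 ≤ a) (hp : 1 ≤ p)
    (hK : 0 < K) (hu : AEStronglyMeasurable u)
    (huK : eLpNorm u (ENNReal.ofReal p) volume ≤ ENNReal.ofReal K)
    (hint : Integrable fun y => (u x - u y) / |x - y| ^ a) (hmax : ∀ y, u y ≤ u x)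
    (hpos : 0 < u x) :
    u x / p * (u x / K) ^ (p * (a - 1)) ≤ ∫ y, (u x - u y) / |x - y| ^ a := by
  simp only [← Real.dist_eq] at hint ⊢
  have hp0 : 0 < p := by linarith
  set M := u x
  -- With this radius a function of norm `K` can reach the height `M` on at most half of the ball.
  set r := (K / M) ^ p with hr
  have hr0 : 0 < r := by positivity
  have hmem : MemLp u (ENNReal.ofReal p) volume := ⟨hu, huK.trans_lt ENNReal.ofReal_lt_top⟩
  have hball : ∫ y in Metric.closedBall x r, ‖u y‖ ^ p ≤ K ^ p := by
    refine (setIntegral_le_integral ?_ ?_).trans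
      (integral_norm_rpow_le_of_eLpNorm_le hp0 hK.le hu huK)
    · simpa only [ENNReal.toReal_ofReal hp0.le] using
        hmem.integrable_norm_rpow (by simpa using hp0) ENNReal.ofReal_ne_top
    · exact Eventually.of_forall fun y => by positivity
  have hscale : (M / K) ^ (p * (a - 1)) = r / r ^ a := by
    rw [rpow_mul (by positivity), ← inv_div K M, inv_rpow (by positivity), inv_rpow hr0.le,
      ← rpow_neg hr0.le, neg_sub, rpow_sub hr0, rpow_one]
  calc M / p * (M / K) ^ (p * (a - 1)) = M / p * (2 * r - K ^ p / M ^ p) / r ^ a := by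
        rw [hscale, ← div_rpow hK.le hpos.le, ← hr]
        ring
    _ ≤ M / p * (2 * r - (∫ y in Metric.closedBall x r, ‖u y‖ ^ p) / M ^ p) / r ^ a := by
        gcongr
    _ ≤ (∫ y in Metric.closedBall x r, (M - u y)) / r ^ a := by
        have : IsFiniteMeasure (volume.restrict (Metric.closedBall x r)) :=
          isFiniteMeasure_restrict.2 measure_closedBall_lt_top.ne
        have := le_integral_sub_of_memLp hp hpos
          (hmem.mono_measure (Measure.restrict_le_self (s := Metric.closedBall x r)))
        rw [measureReal_restrict_apply_univ, Real.volume_real_closedBall hr0.le] at this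
        gcongr
    _ ≤ ∫ y, (M - u y) / dist x y ^ a :=
        setIntegral_closedBall_sub_div_rpow_le ha hint hmax

end LowerBound

section FractionalLaplacian

variable {s : ℝ}

theorem fracC_pos (hs : 0 < s) (hs1 : s < 1) : 0 < fracC s := by
  have hGamma_neg : Real.Gamma (-s) ≠ 0 := by
    refine Real.Gamma_ne_zero fun m hm => ?_
    obtain rfl : s = m := neg_injective hm
    norm_cast at hs hs1
    omega
  have : 0 < Real.Gamma (1 / 2 + s) := Real.Gamma_pos_of_pos (by linarith)
  unfold fracC
  positivity

theorem fracLap_const_mul (s σ : ℝ) (u : ℝ → ℝ) (x : ℝ) :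
    fracLap s (fun y => σ * u y) x = σ * fracLap s u x := by
  simp only [fracLap, ← mul_sub, mul_div_assoc, integral_const_mul]
  ring

theorem le_fracLap_of_isMax {u : ℝ → ℝ} {x p K : ℝ} (hs : 0 < s) (hs1 : s < 1) (hp : 1 ≤ p)
    (hK : 0 < K) (hu : AEStronglyMeasurable u)
    (huK : eLpNorm u (ENNReal.ofReal p) volume ≤ ENNReal.ofReal K)
    (hint : Integrable fun y => (u x - u y) / |x - y| ^ (1 + 2 * s)) (hmax : ∀ y, u y ≤ u x)
    (hpos : 0 < u x) :
    fracC s * (u x / p * (u x / K) ^ (2 * p * s)) ≤ fracLap s u x := by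
  have h := le_integral_sub_div_rpow_of_isMax (by positivity) hp hK hu huK hint hmax hpos
  rw [show p * (1 + 2 * s - 1) = 2 * p * s by ring] at h
  exact mul_le_mul_of_nonneg_left h (fracC_pos hs hs1).le

end FractionalLaplacian

theorem rpow_inv_mul_le_of_mul_rpow_le_inv {b q M K t : ℝ} (hb : 0 < b) (hq : 0 < q)
    (hM : 0 ≤ M) (hK : 0 < K) (ht : 0 < t) (h : b * (M / K) ^ q ≤ t⁻¹) :
    t ^ (1 / q) * M ≤ b ^ (-(1 / q)) * K := by
  have hquot : M / K ≤ (b * t)⁻¹ ^ (1 / q) := by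
    rw [one_div, le_rpow_inv_iff_of_pos (by positivity) (by positivity) hq, mul_inv,
      le_inv_mul_iff₀ hb]
    exact h
  calc t ^ (1 / q) * M = t ^ (1 / q) * (M / K) * K := by field_simp
    _ ≤ t ^ (1 / q) * (b * t)⁻¹ ^ (1 / q) * K := by gcongr
    _ = b ^ (-(1 / q)) * K := by
      rw [← mul_rpow ht.le (by positivity), rpow_neg hb.le, ← inv_rpow hb.le]
      congr 2
      field_simp

namespace IsClassicalSolution

variable {s ε₁ T : ℝ} {θ : ℝ → ℝ → ℝ} {D : Set (ℝ × ℝ)}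

theorem continuous_slice (hθ : IsClassicalSolution s ε₁ θ D) {t : ℝ} (hD : ∀ x, (x, t) ∈ D) :
    Continuous fun x => θ x t :=
  continuous_iff_continuousAt.2 fun x => (hθ.diff_x (x, t) (hD x)).continuousAt

theorem mul_fracLap_le_of_isLocalMax (hθ : IsClassicalSolution s ε₁ θ D) (hε : 0 ≤ ε₁)
    {σ x₀ t₀ : ℝ} (hD : (x₀, t₀) ∈ D) (hmax : IsLocalMax (fun x => σ * θ x t₀) x₀) :
    σ * fracLap s (fun x => θ x t₀) x₀ ≤ -(σ * deriv (θ x₀) t₀) := by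
  have hdx : σ * deriv (fun x => θ x t₀) x₀ = 0 := by
    simpa only [deriv_const_mul_field'] using hmax.deriv_eq_zero
  have hdxx : σ * deriv (deriv fun x => θ x t₀) x₀ ≤ 0 := by
    simpa only [deriv_const_mul_field'] using deriv_deriv_nonpos_of_isLocalMax
      ((hθ.diff_x _ hD).continuousAt.const_mul σ) hmax
  have heqn := hθ.eqn _ hD
  have hvisc := mul_nonpos_of_nonneg_of_nonpos hε hdxx
  linear_combination hvisc + σ * heqn - θ x₀ t₀ * hdx

theorem rpow_mul_le_of_isMaxOn
    (hθ : IsClassicalSolution s ε₁ θ {z : ℝ × ℝ | 0 < z.2 ∧ z.2 ≤ T}) (hs : 0 < s) (hs1 : s < 1)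
    (hε : 0 ≤ ε₁) {p K σ x₀ t₀ : ℝ} (hp : 1 ≤ p) (hK : 0 < K) (hσ : |σ| ≤ 1)
    (hLp : eLpNorm (fun x => θ x t₀) (ENNReal.ofReal p) volume ≤ ENNReal.ofReal K)
    (ht₀ : 0 < t₀) (ht₀T : t₀ ≤ T) (hpos : 0 < σ * θ x₀ t₀)
    (hmax : IsMaxOn (fun z : ℝ × ℝ => z.2 ^ (1 / (2 * p * s)) * (σ * θ z.1 z.2))
      {z : ℝ × ℝ | 0 < z.2 ∧ z.2 ≤ T} (x₀, t₀)) :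
    t₀ ^ (1 / (2 * p * s)) * (σ * θ x₀ t₀) ≤
      (2 * s * fracC s) ^ (-(1 / (2 * p * s))) * K := by
  have : 0 < p := by linarith
  have hD : ∀ x, (x, t₀) ∈ {z : ℝ × ℝ | 0 < z.2 ∧ z.2 ≤ T} := fun x => ⟨ht₀, ht₀T⟩
  have hspace : ∀ x, σ * θ x t₀ ≤ σ * θ x₀ t₀ := fun x =>
    le_of_mul_le_mul_left (hmax (hD x)) (rpow_pos_of_pos ht₀ _)
  have htime : IsLocalMaxOn (fun t => t ^ (1 / (2 * p * s)) * (σ * θ x₀ t)) (Iic t₀) t₀ := by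
    filter_upwards [Ioc_mem_nhdsLE ht₀] with t ht
    exact hmax (show (x₀, t) ∈ _ from ⟨ht.1, ht.2.trans ht₀T⟩)
  have hσLp : eLpNorm (fun x => σ * θ x t₀) (ENNReal.ofReal p) volume ≤ ENNReal.ofReal K :=
    (eLpNorm_mono fun x => by
      simpa [abs_mul] using mul_le_of_le_one_left (abs_nonneg (θ x t₀)) hσ).trans hLp
  have hint : Integrable fun y => (σ * θ x₀ t₀ - σ * θ y t₀) / |x₀ - y| ^ (1 + 2 * s) := by
    simpa only [← mul_sub, mul_div_assoc] using (hθ.integrable _ (hD x₀)).const_mul σ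
  have hbound : fracC s * (σ * θ x₀ t₀ / p * (σ * θ x₀ t₀ / K) ^ (2 * p * s)) ≤
      1 / (2 * p * s) / t₀ * (σ * θ x₀ t₀) := calc
    _ ≤ fracLap s (fun x => σ * θ x t₀) x₀ :=
      le_fracLap_of_isMax hs hs1 hp hK
        ((hθ.continuous_slice hD).const_mul σ).aestronglyMeasurable hσLp hint hspace hpos
    _ = σ * fracLap s (fun x => θ x t₀) x₀ := fracLap_const_mul ..
    _ ≤ -(σ * deriv (θ x₀) t₀) :=
      hθ.mul_fracLap_le_of_isLocalMax hε (hD x₀) (Eventually.of_forall hspace)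
    _ ≤ _ := neg_deriv_le_of_isLocalMaxOn_rpow_mul ht₀
      ((hθ.diff_t _ (hD x₀)).hasDerivAt.const_mul σ) htime
  generalize σ * θ x₀ t₀ = M at hpos hbound ⊢
  refine rpow_inv_mul_le_of_mul_rpow_le_inv (mul_pos (by positivity) (fracC_pos hs hs1))
    (by positivity) hpos.le hK ht₀ ?_
  calc 2 * s * fracC s * (M / K) ^ (2 * p * s)
      = fracC s * (M / p * (M / K) ^ (2 * p * s)) * (2 * p * s / M) := by field_simp
    _ ≤ 1 / (2 * p * s) / t₀ * M * (2 * p * s / M) :=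
      mul_le_mul_of_nonneg_right hbound (by positivity)
    _ = t₀⁻¹ := by field_simp

theorem rpow_mul_abs_le_of_isMaxOn
    (hθ : IsClassicalSolution s ε₁ θ {z : ℝ × ℝ | 0 < z.2 ∧ z.2 ≤ T}) (hs : 0 < s) (hs1 : s < 1)
    (hε : 0 ≤ ε₁) {p K x₀ t₀ : ℝ} (hp : 1 ≤ p) (hK : 0 < K)
    (hLp : eLpNorm (fun x => θ x t₀) (ENNReal.ofReal p) volume ≤ ENNReal.ofReal K)
    (ht₀ : 0 < t₀) (ht₀T : t₀ ≤ T) (hne : θ x₀ t₀ ≠ 0)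
    (hmax : IsMaxOn (fun z : ℝ × ℝ => z.2 ^ (1 / (2 * p * s)) * |θ z.1 z.2|)
      {z : ℝ × ℝ | 0 < z.2 ∧ z.2 ≤ T} (x₀, t₀)) :
    t₀ ^ (1 / (2 * p * s)) * |θ x₀ t₀| ≤
      (2 * s * fracC s) ^ (-(1 / (2 * p * s))) * K := by
  obtain ⟨σ, hσ, hσθ⟩ : ∃ σ : ℝ, |σ| = 1 ∧ σ * θ x₀ t₀ = |θ x₀ t₀| := by
    rcases abs_choice (θ x₀ t₀) with h | h
    · exact ⟨1, by simp, by simp [h]⟩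
    · exact ⟨-1, by simp, by simp [h]⟩
  rw [← hσθ]
  refine hθ.rpow_mul_le_of_isMaxOn hs hs1 hε hp hK hσ.le hLp ht₀ ht₀T
    (hσθ ▸ abs_pos.2 hne) fun z hz => ?_
  calc z.2 ^ (1 / (2 * p * s)) * (σ * θ z.1 z.2)
      ≤ z.2 ^ (1 / (2 * p * s)) * |θ z.1 z.2| := by
        gcongr
        · exact rpow_nonneg hz.1.le _
        · simpa [abs_mul, hσ] using le_abs_self (σ * θ z.1 z.2)
    _ ≤ t₀ ^ (1 / (2 * p * s)) * |θ x₀ t₀| := hmax hz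
    _ = t₀ ^ (1 / (2 * p * s)) * (σ * θ x₀ t₀) := by rw [hσθ]

theorem exists_isMaxOn_rpow_mul_abs
    (hθ : IsClassicalSolution s ε₁ θ {z : ℝ × ℝ | 0 < z.2 ∧ z.2 ≤ T}) {α x t : ℝ} (hα : 0 ≤ α)
    (hinf : ∀ a : ℝ, 0 < a → a ≤ T → ∀ ε : ℝ, 0 < ε →
      ∃ R : ℝ, ∀ x : ℝ, R < |x| → ∀ t ∈ Icc a T, |θ x t| < ε)
    (hzero : ∀ ε : ℝ, 0 < ε → ∃ δ : ℝ, 0 < δ ∧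
      ∀ t : ℝ, 0 < t → t < δ → t ≤ T → ∀ x : ℝ, t ^ α * |θ x t| < ε)
    (ht : 0 < t) (htT : t ≤ T) (hne : θ x t ≠ 0) :
    ∃ z ∈ {z : ℝ × ℝ | 0 < z.2 ∧ z.2 ≤ T},
      IsMaxOn (fun z : ℝ × ℝ => z.2 ^ α * |θ z.1 z.2|) {z : ℝ × ℝ | 0 < z.2 ∧ z.2 ≤ T} z := by
  have hT : 0 < T ^ α := rpow_pos_of_pos (ht.trans_le htT) α
  refine exists_isMaxOn_strip (p₁ := (x, t))
    ((continuousOn_snd.rpow_const fun _ _ => Or.inr hα).mul hθ.cont.abs) (fun a ha haT ε hε => ?_)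
    hzero ⟨ht, htT⟩ (mul_pos (rpow_pos_of_pos ht α) (abs_pos.2 hne))
  obtain ⟨R, hR⟩ := hinf a ha haT (ε / T ^ α) (div_pos hε hT)
  refine ⟨R, fun y hy τ hτ => ?_⟩
  calc τ ^ α * |θ y τ| ≤ T ^ α * |θ y τ| := by
        gcongr
        exacts [(ha.trans_le hτ.1).le, hτ.2]
    _ < ε := (lt_div_iff₀' hT).1 (hR y hy τ hτ)

end IsClassicalSolution

theorem linfty_decay_general {s ε₁ T p K : ℝ} {θ : ℝ → ℝ → ℝ} (hs : 0 < s) (hs1 : s < 1)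
    (hε : 0 ≤ ε₁) (hp : 1 ≤ p) (hK : 0 < K)
    (hθ : IsClassicalSolution s ε₁ θ {z : ℝ × ℝ | 0 < z.2 ∧ z.2 ≤ T})
    (hLp : ∀ t : ℝ, 0 < t → t ≤ T →
      eLpNorm (fun x => θ x t) (ENNReal.ofReal p) volume ≤ ENNReal.ofReal K)
    (hinf : ∀ a : ℝ, 0 < a → a ≤ T → ∀ ε : ℝ, 0 < ε →
      ∃ R : ℝ, ∀ x : ℝ, R < |x| → ∀ t ∈ Icc a T, |θ x t| < ε)
    (hzero : ∀ ε : ℝ, 0 < ε → ∃ δ : ℝ, 0 < δ ∧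
      ∀ t : ℝ, 0 < t → t < δ → t ≤ T → ∀ x : ℝ, t ^ (1 / (2 * p * s)) * |θ x t| < ε)
    {t : ℝ} (ht : 0 < t) (htT : t ≤ T) (x : ℝ) :
    |θ x t| ≤ (2 * s * fracC s) ^ (-(1 / (2 * p * s))) * t ^ (-(1 / (2 * p * s))) * K := by
  have := fracC_pos hs hs1
  have : 0 < p := by linarith
  rcases eq_or_ne (θ x t) 0 with hz | hne
  · rw [hz, abs_zero]
    positivity
  obtain ⟨⟨x₀, t₀⟩, ⟨ht₀, ht₀T⟩, hmax⟩ :=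
    hθ.exists_isMaxOn_rpow_mul_abs (by positivity) hinf hzero ht htT hne
  have hle : t ^ (1 / (2 * p * s)) * |θ x t| ≤ t₀ ^ (1 / (2 * p * s)) * |θ x₀ t₀| :=
    hmax (show (x, t) ∈ _ from ⟨ht, htT⟩)
  have hne₀ : θ x₀ t₀ ≠ 0 := fun h₀ => by
    rw [h₀, abs_zero, mul_zero] at hle
    exact hle.not_gt (mul_pos (rpow_pos_of_pos ht _) (abs_pos.2 hne))
  have hbound := hle.trans <| hθ.rpow_mul_abs_le_of_isMaxOn hs hs1 hε hp hK (hLp t₀ ht₀ ht₀T)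
    ht₀ ht₀T hne₀ hmax
  rw [rpow_neg ht.le, mul_right_comm, ← div_eq_mul_inv, le_div_iff₀' (rpow_pos_of_pos ht _)]
  exact hbound

/-- `L^∞` decay. If `‖θ(·,t)‖_{L²} ≤ K` on `(0,T]`, `θ` vanishes at spatial
infinity uniformly on compact time subsets, and `t^{1/(4s)} θ → 0` as `t → 0⁺` uniformly
in `x`, then `|θ(x,t)| ≤ C(s) t^{-1/(4s)} K`, with `C(s)` depending only on `s`. -/
theorem linfty_decay (s : ℝ) (hs : 0 < s) (hs' : s ≤ 1 / 2) :
    ∃ C : ℝ, 0 < C ∧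
      ∀ ε₁ T K : ℝ, ∀ θ : ℝ → ℝ → ℝ, 0 < ε₁ → 0 < T → 0 < K →
        IsClassicalSolution s ε₁ θ {p : ℝ × ℝ | 0 < p.2 ∧ p.2 ≤ T} →
        (∀ t : ℝ, 0 < t → t ≤ T →
          eLpNorm (fun x => θ x t) 2 volume ≤ ENNReal.ofReal K) →
        (∀ a : ℝ, 0 < a → a ≤ T → ∀ ε : ℝ, 0 < ε →
          ∃ R : ℝ, ∀ x : ℝ, R < |x| → ∀ t ∈ Set.Icc a T, |θ x t| < ε) →
        (∀ ε : ℝ, 0 < ε → ∃ δ : ℝ, 0 < δ ∧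
          ∀ t : ℝ, 0 < t → t < δ → t ≤ T → ∀ x : ℝ,
            t ^ (1 / (4 * s)) * |θ x t| < ε) →
        ∀ t : ℝ, 0 < t → t ≤ T → ∀ x : ℝ,
          |θ x t| ≤ C * t ^ (-(1 / (4 * s))) * K := by
  have h4 : 2 * 2 * s = 4 * s := by ring
  have hs1 : s < 1 := by linarith
  refine ⟨(2 * s * fracC s) ^ (-(1 / (4 * s))),
    rpow_pos_of_pos (mul_pos (mul_pos two_pos hs) (fracC_pos hs hs1)) _,
    fun ε₁ T K θ hε _ hK hθ hL2 hinf hzero t ht htT x => ?_⟩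
  exact h4 ▸ linfty_decay_general hs hs1 hε.le one_le_two hK hθ (by simpa using hL2) hinf
    (by simpa only [h4] using hzero) ht htT x
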